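/- Let k be a field of characteristic zero and d ≥ 1. Let R = k[t₁,…,t_d] and S = k[x₁,…,x_d], let V be a k-vector space with d pairwise commuting, locally nilpotent k-linear endomorphisms N₁,…,N_d, and make M = V ⊗_k R into an S-module via x_i ↦ N_i ⊗ id + id ⊗ ∂/∂t_i. Let k itself be the S-module S/(x₁,…,x_d). Then Ext^i_S(k, M) = 0 for all i ≥ 1, and Ext^0_S(k, M) = Hom_S(k, M) is isomorphic to the space of joint invariants {m ∈ M : x_i·m = 0 for all i = 1,…,d}. -/

import Mathlib

open scoped TensorProduct

/-- The joint invariants `{m ∈ M : s i • m = 0 for all i}` of a family of scalars,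
as an additive subgroup of `M`. -/
def jointInvariants {S M : Type} [Ring S] [AddCommGroup M] [Module S M]
    {ι : Type} (s : ι → S) : AddSubgroup M where
  carrier := {m | ∀ i, s i • m = 0}
  add_mem' := by
    intro a b ha hb i
    rw [smul_add, ha i, hb i, add_zero]
  zero_mem' := by
    intro i
    rw [smul_zero]
  neg_mem' := by
    intro a ha i
    rw [smul_neg, ha i, neg_zero]

/-- The Ext group `Ext^i_S(A, B)` of two `S`-modules. -/
noncomputable def extGroup (S : Type) [CommRing S] (A B : ModuleCat S) (i : ℕ) :
    ModuleCat S :=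
  ((Ext S (ModuleCat S) i).obj (Opposite.op A)).obj B

/-!
Adjoin the variables one at a time: since `X j` is regular on `S ⧸ (X i)_{i ∈ t}` for `j ∉ t`, the
long exact sequence of `0 → S ⧸ I → S ⧸ I → S ⧸ (I + (X j)) → 0` propagates the vanishing of
`Ext^{≥ 1}(-, M)` as soon as `X j` maps the common kernel of the `X i`, `i ∈ t`, onto itself.
This surjectivity comes from antidifferentiation `J` in `t_j`: with `n = N_j ⊗ id` locally nilpotent
and commuting with `J`, the operator `∂/∂t_j + n` has the right inverse `∑ r, (-n)^r J^(r+1)`, and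
`J` and `n` commute with the action of all the other variables.
-/

open CategoryTheory MvPolynomial Submodule

universe u v w

section Ext

variable {C : Type u} [Category.{v} C] [Abelian C]

lemma isZero_ext_succ_of_subsingleton_abelianExt (R : Type*) [Ring R] [Linear R C]
    [EnoughProjectives C] [HasExt.{w} C] (A B : C) (n : ℕ)
    [Subsingleton (Abelian.Ext.{w} A B (n + 1))] :
    Limits.IsZero (((Ext R C (n + 1)).obj (Opposite.op A)).obj B) := by
  let P := projectiveResolution A
  refine .of_iso ?_ (P.isoExt (n + 1) B)
  rw [← HomologicalComplex.exactAt_iff_isZero_homology,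
    HomologicalComplex.exactAt_iff' _ n (n + 1) (n + 2) (by simp) (by simp),
    ShortComplex.moduleCat_exact_iff]
  intro (x : P.complex.X (n + 1) ⟶ B) (hx : P.complex.d (n + 2) (n + 1) ≫ x = 0)
  exact (P.extMk_eq_zero_iff x (n + 2) rfl hx n rfl).1 (Subsingleton.elim _ _)

variable [HasExt.{w} C]

lemma subsingleton_abelianExt_of_iso {A A' : C} (e : A ≅ A') (B : C) (n : ℕ)
    [Subsingleton (Abelian.Ext.{w} A B n)] : Subsingleton (Abelian.Ext.{w} A' B n) :=
  let E : Abelian.Ext.{w} A' B n ≃+ Abelian.Ext.{w} A B n :=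
    (((Abelian.extFunctor.{w} n).mapIso e.op).app B).addCommGroupIsoToAddEquiv
  E.toEquiv.subsingleton

lemma subsingleton_abelianExt_succ_of_shortExact {T : ShortComplex C} (hT : T.ShortExact) (B : C)
    (h₁ : ∀ n, Subsingleton (Abelian.Ext.{w} T.X₁ B (n + 1)))
    (h₂ : ∀ n, Subsingleton (Abelian.Ext.{w} T.X₂ B (n + 1)))
    (hsurj : ∀ f : T.X₁ ⟶ B, ∃ g : T.X₂ ⟶ B, T.f ≫ g = f) (n : ℕ) :
    Subsingleton (Abelian.Ext.{w} T.X₃ B (n + 1)) := by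
  refine subsingleton_of_forall_eq 0 fun x ↦ ?_
  obtain ⟨y, rfl⟩ := Abelian.Ext.contravariant_sequence_exact₃ hT B x (Subsingleton.elim _ _)
    (n₀ := n) (add_comm 1 n)
  cases n with
  | zero =>
    obtain ⟨f, rfl⟩ := (Abelian.Ext.mk₀_bijective _ _).2 y
    obtain ⟨g, rfl⟩ := hsurj f
    rw [← Abelian.Ext.mk₀_comp_mk₀, hT.extClass_comp_assoc]
  | succ n => rw [Subsingleton.elim y 0, Abelian.Ext.comp_zero]

end Ext

section Torsion

variable {S : Type u} [CommRing S] {M : Type v} [AddCommGroup M] [Module S M]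

/-- Evaluation at the class of `1` identifies `Hom_S(S/I, M)` with the `I`-torsion of `M`. -/
def homQuotientEquivTorsionBySet (I : Ideal S) :
    ((S ⧸ I) →ₗ[S] M) ≃ₗ[S] torsionBySet S M (I : Set S) where
  toFun f := ⟨f (Submodule.Quotient.mk 1), (mem_torsionBySet_iff _ _).2 fun b ↦ by
    rw [← map_smul, ← Submodule.Quotient.mk_smul, smul_eq_mul, mul_one,
      (Submodule.Quotient.mk_eq_zero I).2 b.2, map_zero]⟩
  invFun m := I.liftQ (LinearMap.toSpanSingleton S M m) fun b hb ↦
    (mem_torsionBySet_iff _ _).1 m.2 ⟨b, hb⟩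
  map_add' _ _ := rfl
  map_smul' _ _ := rfl
  left_inv f := by
    ext
    simp
  right_inv m := Subtype.ext (one_smul S (m : M))

end Torsion

section JointInvariants

variable {S M ι : Type} [CommRing S] [AddCommGroup M] [Module S M]

lemma jointInvariants_eq_torsionBySet_range (s : ι → S) :
    jointInvariants (M := M) s = (torsionBySet S M (Set.range s)).toAddSubgroup := by
  ext m
  simp [jointInvariants]

/-- `Hom_S(S/(sᵢ), M)` is the group of joint invariants of the family `s`. -/
def homQuotientSpanRangeEquivJointInvariants (s : ι → S) :
    ((S ⧸ Ideal.span (Set.range s)) →ₗ[S] M) ≃+ jointInvariants (M := M) s :=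
  (homQuotientEquivTorsionBySet (Ideal.span (Set.range s))).toAddEquiv.trans <|
    AddEquiv.addSubgroupCongr
      (H := (torsionBySet S M (Ideal.span (Set.range s) : Set S)).toAddSubgroup) <| by
        rw [← torsionBySet_eq_torsionBySet_span, jointInvariants_eq_torsionBySet_range]

end JointInvariants

section QuotientExt

variable {S A M : Type u} [CommRing S] [AddCommGroup A] [Module S A] [AddCommGroup M] [Module S M]

open scoped Pointwise in
lemma subsingleton_abelianExt_quotient_smul_top {a : S} (hreg : IsSMulRegular A a)
    (hA : ∀ n, Subsingleton (Abelian.Ext.{u} (ModuleCat.of S A) (ModuleCat.of S M) (n + 1)))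
    (hsurj : Function.Surjective fun f : A →ₗ[S] M ↦ a • f) (n : ℕ) :
    Subsingleton (Abelian.Ext.{u} (ModuleCat.of S (A ⧸ a • (⊤ : Submodule S A)))
      (ModuleCat.of S M) (n + 1)) := by
  have hexact : ((ModuleCat.of S A).smulShortComplex a).ShortExact :=
    hreg.smulShortComplex_shortExact
  refine subsingleton_abelianExt_succ_of_shortExact hexact _ hA hA (fun f ↦ ?_) n
  obtain ⟨g, hg⟩ := hsurj f.hom
  refine ⟨ModuleCat.ofHom g, ModuleCat.hom_ext <| Eq.trans ?_ hg⟩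
  ext x
  exact map_smul g a x

open scoped Pointwise in
/-- The third isomorphism theorem for `I ≤ I + (a)`. -/
noncomputable def quotientSMulTopEquivQuotientSup (I : Ideal S) (a : S) :
    ((S ⧸ I) ⧸ a • (⊤ : Submodule S (S ⧸ I))) ≃ₗ[S] S ⧸ (I ⊔ Ideal.span {a}) :=
  quotEquivOfEq _ _ (by
    rw [← Submodule.ideal_span_singleton_smul, ← I.range_mkQ, ← Submodule.map_top,
      ← Submodule.map_smul'', smul_eq_mul, Ideal.mul_top]) ≪≫ₗ
  quotientQuotientEquivQuotientSup I (Ideal.span {a})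

lemma subsingleton_abelianExt_quotient_sup_span_singleton {I : Ideal S} {a : S}
    (hreg : IsSMulRegular (S ⧸ I) a)
    (hI : ∀ n, Subsingleton (Abelian.Ext.{u} (ModuleCat.of S (S ⧸ I)) (ModuleCat.of S M) (n + 1)))
    (hdiv : ∀ m ∈ torsionBySet S M (I : Set S), ∃ m' ∈ torsionBySet S M (I : Set S), a • m' = m)
    (n : ℕ) :
    Subsingleton (Abelian.Ext.{u} (ModuleCat.of S (S ⧸ (I ⊔ Ideal.span {a})))
      (ModuleCat.of S M) (n + 1)) := by
  have hsurj : Function.Surjective fun f : (S ⧸ I) →ₗ[S] M ↦ a • f := fun f ↦ by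
    let E := homQuotientEquivTorsionBySet (M := M) I
    obtain ⟨m', hm', h⟩ := hdiv (E f) (E f).2
    refine ⟨E.symm ⟨m', hm'⟩, E.injective <| Subtype.ext ?_⟩
    rw [map_smul, E.apply_symm_apply]
    exact h
  have := subsingleton_abelianExt_quotient_smul_top hreg hI hsurj n
  exact subsingleton_abelianExt_of_iso (quotientSMulTopEquivQuotientSup I a).toModuleIso _ _

lemma subsingleton_abelianExt_quotient_span_image {ι : Type*} (s : ι → S)
    (hreg : ∀ (t : Finset ι) (j : ι), j ∉ t → IsSMulRegular (S ⧸ Ideal.span (s '' t)) (s j))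
    (hdiv : ∀ (t : Finset ι) (j : ι), j ∉ t → ∀ m ∈ torsionBySet S M (s '' t),
      ∃ m' ∈ torsionBySet S M (s '' t), s j • m' = m)
    (t : Finset ι) (n : ℕ) :
    Subsingleton (Abelian.Ext.{u} (ModuleCat.of S (S ⧸ Ideal.span (s '' t)))
      (ModuleCat.of S M) (n + 1)) := by
  classical
  induction t using Finset.induction_on generalizing n with
  | empty =>
    have : Projective (ModuleCat.of S S) := (IsProjective.iff_projective S).1 inferInstance
    have : Subsingleton (Abelian.Ext.{u} (ModuleCat.of S S) (ModuleCat.of S M) (n + 1)) :=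
      Abelian.Ext.subsingleton_of_projective _ _ _
    let e : S ≃ₗ[S] S ⧸ Ideal.span (s '' (∅ : Finset ι)) :=
      (quotEquivOfEqBot _ (by simp)).symm
    exact subsingleton_abelianExt_of_iso e.toModuleIso _ _
  | insert j t hj ih =>
    have hspan : Ideal.span (s '' (insert j t : Finset ι)) =
        Ideal.span (s '' t) ⊔ Ideal.span {s j} := by
      rw [Finset.coe_insert, Set.image_insert_eq, Ideal.span_insert, sup_comm]
    have hdivt := hdiv t j hj
    rw [torsionBySet_eq_torsionBySet_span] at hdivt
    rw [hspan]
    exact subsingleton_abelianExt_quotient_sup_span_singleton (hreg t j hj) ih hdivt n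

end QuotientExt

section MvPolynomial

variable {σ k : Type*} [CommRing k]

lemma isSMulRegular_X_quotient_span_X_image {s : Set σ} {j : σ} (hj : j ∉ s) :
    IsSMulRegular (MvPolynomial σ k ⧸ Ideal.span (X '' s : Set (MvPolynomial σ k)))
      (X j : MvPolynomial σ k) := by
  refine .of_right_eq_zero_of_smul fun x hx ↦ ?_
  obtain ⟨p, rfl⟩ := Submodule.Quotient.mk_surjective _ x
  rw [← Submodule.Quotient.mk_smul] at hx
  rw [Submodule.Quotient.mk_eq_zero, mem_ideal_span_X_image] at hx ⊢
  intro a ha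
  obtain ⟨i, hi, hai⟩ := hx (Finsupp.single j 1 + a) (by
    rwa [mem_support_iff, smul_eq_mul, coeff_X_mul, ← mem_support_iff])
  have hji : j ≠ i := fun h ↦ hj (h ▸ hi)
  exact ⟨i, hi, by simpa [Finsupp.single_apply, hji] using hai⟩

lemma mem_idealOfVars_iff_constantCoeff_eq_zero (p : MvPolynomial σ k) :
    p ∈ idealOfVars σ k ↔ constantCoeff p = 0 := by
  rw [← pow_one (idealOfVars σ k), mem_pow_idealOfVars_iff']
  simp [constantCoeff_eq, Finsupp.degree_eq_zero_iff]

/-- The identification `S/(xᵢ) ≃ k`, where `S = k[xᵢ]` acts on `k` through the constant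
coefficient. -/
noncomputable def quotientIdealOfVarsEquiv [Module (MvPolynomial σ k) k]
    (hk : ∀ (p : MvPolynomial σ k) (a : k), p • a = constantCoeff p * a) :
    (MvPolynomial σ k ⧸ idealOfVars σ k) ≃ₗ[MvPolynomial σ k] k :=
  quotEquivOfEq _ _ (by
    ext p
    simp [mem_idealOfVars_iff_constantCoeff_eq_zero, hk]) ≪≫ₗ
  (LinearMap.toSpanSingleton (MvPolynomial σ k) k 1).quotKerEquivOfSurjective
    fun a ↦ ⟨C a, by simp [hk]⟩

/-- The `k`-linear antiderivative in the variable `j`, normalised to be divisible by `X j`. -/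
noncomputable def antideriv [Algebra ℚ k] (j : σ) : Module.End k (MvPolynomial σ k) :=
  (basisMonomials σ k).constr k fun a ↦
    monomial (a + Finsupp.single j 1) (algebraMap ℚ k (a j + 1)⁻¹)

variable [Algebra ℚ k]

lemma antideriv_monomial (j : σ) (a : σ →₀ ℕ) (c : k) :
    antideriv j (monomial a c) =
      monomial (a + Finsupp.single j 1) (c * algebraMap ℚ k (a j + 1)⁻¹) := by
  have hc : monomial a c = c • basisMonomials σ k a := by simp [smul_monomial]
  rw [hc, map_smul, antideriv, Module.Basis.constr_basis, smul_monomial, smul_eq_mul]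

lemma pderiv_mul_antideriv (j : σ) :
    (pderiv j).toLinearMap * antideriv j = (1 : Module.End k (MvPolynomial σ k)) := by
  refine (basisMonomials σ k).ext fun a ↦ ?_
  have hinv : algebraMap ℚ k (a j + 1)⁻¹ * (a j + 1) = 1 := by
    rw [← map_natCast (algebraMap ℚ k), ← map_one (algebraMap ℚ k), ← map_add, ← map_mul,
      inv_mul_cancel₀ (by positivity)]
  simp [antideriv_monomial, pderiv_monomial, hinv]

lemma commute_pderiv_antideriv {i j : σ} (hij : i ≠ j) :
    Commute (pderiv i).toLinearMap (antideriv j : Module.End k (MvPolynomial σ k)) := by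
  refine (basisMonomials σ k).ext fun a ↦ ?_
  obtain hai | hai := eq_or_ne (a i) 0
  · simp [antideriv_monomial, pderiv_monomial, hai, hij]
  · have hsub : a + Finsupp.single j 1 - Finsupp.single i 1 =
        a - Finsupp.single i 1 + Finsupp.single j 1 :=
      tsub_add_eq_add_tsub (Finsupp.single_le_iff.2 (Nat.one_le_iff_ne_zero.2 hai)) |>.symm
    simp [antideriv_monomial, pderiv_monomial, hij, hsub, mul_comm]

end MvPolynomial

section Operators

lemma exists_mem_add_apply_eq {A E : Type*} [Ring A] [AddCommGroup E] [Module A E]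
    {D J n : Module.End A E} (hDJ : D * J = 1) (hnJ : Commute n J) {K : Submodule A E}
    (hJK : ∀ x ∈ K, J x ∈ K) (hnK : ∀ x ∈ K, n x ∈ K) {m : E} (hm : m ∈ K)
    (hnil : ∃ r : ℕ, (n ^ r) m = 0) : ∃ m' ∈ K, (D + n) m' = m := by
  obtain ⟨r, hr⟩ := hnil
  induction r generalizing m with
  | zero => exact ⟨0, K.zero_mem, by simpa using hr.symm⟩
  | succ r ih =>
    have hpow : (n ^ r) (n (J m)) = 0 := by
      have h : n ^ r * n * J = J * n ^ (r + 1) := by rw [← pow_succ, (hnJ.pow_left _).eq]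
      simpa [hr] using LinearMap.congr_fun h m
    have hDJm : D (J m) = m := LinearMap.congr_fun hDJ m
    obtain ⟨m', hm'K, hm'⟩ := ih (hnK _ (hJK _ hm)) hpow
    refine ⟨J m - m', K.sub_mem (hJK _ hm) hm'K, ?_⟩
    rw [map_sub, hm', LinearMap.add_apply, hDJm, add_sub_cancel_right]

variable {k V W : Type*} [CommRing k] [AddCommGroup V] [Module k V] [AddCommGroup W] [Module k W]

lemma commute_rTensor_lTensor (f : Module.End k V) (g : Module.End k W) :
    Commute (f.rTensor W) (g.lTensor V) :=
  (LinearMap.rTensor_comp_lTensor V f g).trans (LinearMap.lTensor_comp_rTensor V f g).symm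

lemma exists_rTensor_pow_apply_eq_zero {f : Module.End k V} (hf : ∀ v, ∃ r : ℕ, (f ^ r) v = 0)
    (x : V ⊗[k] W) : ∃ r : ℕ, (f.rTensor W ^ r) x = 0 := by
  suffices x ∈ Module.End.maxGenEigenspace (f.rTensor W) 0 by
    simpa [Module.End.mem_maxGenEigenspace] using this
  induction x using TensorProduct.induction_on with
  | zero => exact zero_mem _
  | tmul v w =>
    obtain ⟨r, hr⟩ := hf v
    exact (Module.End.mem_maxGenEigenspace _ _ _).2
      ⟨r, by rw [zero_smul, sub_zero, LinearMap.rTensor_pow, LinearMap.rTensor_tmul, hr,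
        TensorProduct.zero_tmul]⟩
  | add x y hx hy => exact add_mem hx hy

/-- The operator `Nᵢ ⊗ id + id ⊗ ∂/∂tᵢ` on `V ⊗ k[t]` by which `xᵢ` acts. -/
noncomputable def diagonalAction {σ : Type*} (N : σ → Module.End k V) (i : σ) :
    Module.End k (V ⊗[k] MvPolynomial σ k) :=
  (N i).rTensor (MvPolynomial σ k) + (pderiv i).toLinearMap.lTensor V

variable {σ : Type*} {N : σ → Module.End k V}

lemma commute_diagonalAction_rTensor {i j : σ} (hN : Commute (N i) (N j)) :
    Commute (diagonalAction N i) ((N j).rTensor (MvPolynomial σ k)) := by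
  refine .add_left ?_ (commute_rTensor_lTensor _ _).symm
  exact hN.map (Module.End.rTensorAlgHom k V (MvPolynomial σ k))

lemma commute_diagonalAction_lTensor_antideriv [Algebra ℚ k] {i j : σ} (hij : i ≠ j) :
    Commute (diagonalAction N i) ((antideriv j).lTensor V) := by
  refine .add_left (commute_rTensor_lTensor _ _) ?_
  exact (commute_pderiv_antideriv hij).map (Module.End.lTensorAlgHom k (MvPolynomial σ k) V)

lemma exists_diagonalAction_apply_eq [Algebra ℚ k] {s : Set σ} {j : σ} (hj : j ∉ s)
    (hcomm : ∀ i ∈ s, Commute (N i) (N j)) (hnil : ∀ v, ∃ r : ℕ, (N j ^ r) v = 0)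
    {m : V ⊗[k] MvPolynomial σ k} (hm : ∀ i ∈ s, diagonalAction N i m = 0) :
    ∃ m', (∀ i ∈ s, diagonalAction N i m' = 0) ∧ diagonalAction N j m' = m := by
  let K : Submodule k (V ⊗[k] MvPolynomial σ k) := ⨅ i ∈ s, LinearMap.ker (diagonalAction N i)
  have mem_K (x) : x ∈ K ↔ ∀ i ∈ s, diagonalAction N i x = 0 := by simp [K]
  have stable_K (f : Module.End k (V ⊗[k] MvPolynomial σ k))
      (hf : ∀ i ∈ s, Commute (diagonalAction N i) f) (x) (hx : x ∈ K) : f x ∈ K := by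
    rw [mem_K] at hx ⊢
    intro i hi
    simpa [hx i hi] using LinearMap.congr_fun (hf i hi).eq x
  have hDJ : (pderiv j).toLinearMap.lTensor V * (antideriv j).lTensor V =
      (1 : Module.End k (V ⊗[k] MvPolynomial σ k)) := by
    rw [← LinearMap.lTensor_mul, pderiv_mul_antideriv]
    exact LinearMap.lTensor_id V _
  obtain ⟨m', hm'K, hm'⟩ := exists_mem_add_apply_eq hDJ (commute_rTensor_lTensor (N j) _)
    (stable_K _ fun i hi ↦ commute_diagonalAction_lTensor_antideriv (ne_of_mem_of_not_mem hi hj))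
    (stable_K _ fun i hi ↦ commute_diagonalAction_rTensor (hcomm i hi))
    ((mem_K m).2 hm) (exists_rTensor_pow_apply_eq_zero hnil m)
  refine ⟨m', (mem_K m').1 hm'K, ?_⟩
  rwa [diagonalAction, add_comm]

end Operators

theorem stmt5_general {k σ V : Type} [CommRing k] [Algebra ℚ k] [Finite σ]
    [AddCommGroup V] [Module k V] (N : σ → Module.End k V)
    (hcomm : ∀ i j, Commute (N i) (N j)) (hnil : ∀ i v, ∃ r : ℕ, (N i ^ r) v = 0)
    [Module (MvPolynomial σ k) (V ⊗[k] MvPolynomial σ k)]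
    (hX : ∀ (i : σ) (m : V ⊗[k] MvPolynomial σ k),
      (X i : MvPolynomial σ k) • m = diagonalAction N i m)
    [Module (MvPolynomial σ k) k]
    (hk : ∀ (p : MvPolynomial σ k) (a : k), p • a = constantCoeff p * a) :
    (∀ i : ℕ, 1 ≤ i → Subsingleton (extGroup (MvPolynomial σ k) (ModuleCat.of _ k)
      (ModuleCat.of _ (V ⊗[k] MvPolynomial σ k)) i)) ∧
    Nonempty ((k →ₗ[MvPolynomial σ k] (V ⊗[k] MvPolynomial σ k)) ≃+
      jointInvariants (M := V ⊗[k] MvPolynomial σ k) (X : σ → MvPolynomial σ k)) := by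
  have e := quotientIdealOfVarsEquiv hk
  refine ⟨fun i hi ↦ ?_, ⟨(e.symm.arrowCongrAddEquiv (.refl _ _)).trans
    (homQuotientSpanRangeEquivJointInvariants X)⟩⟩
  obtain ⟨n, rfl⟩ := Nat.exists_eq_add_of_le' hi
  have hdiv (t : Finset σ) (j : σ) (hj : j ∉ t) (m : V ⊗[k] MvPolynomial σ k)
      (hm : m ∈ torsionBySet (MvPolynomial σ k) _ (X '' t)) :
      ∃ m' ∈ torsionBySet (MvPolynomial σ k) _ (X '' t), (X j : MvPolynomial σ k) • m' = m := by
    simp only [mem_torsionBySet_iff, Subtype.forall, Set.forall_mem_image, hX] at hm ⊢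
    exact exists_diagonalAction_apply_eq hj (fun i _ ↦ hcomm i j) (hnil j) hm
  have := Fintype.ofFinite σ
  have hquot := subsingleton_abelianExt_quotient_span_image X
    (fun t j hj ↦ isSMulRegular_X_quotient_span_X_image hj) hdiv Finset.univ n
  rw [Finset.coe_univ, Set.image_univ] at hquot
  have := subsingleton_abelianExt_of_iso e.toModuleIso
    (ModuleCat.of _ (V ⊗[k] MvPolynomial σ k)) (n + 1)
  exact ModuleCat.subsingleton_of_isZero
    (isZero_ext_succ_of_subsingleton_abelianExt (MvPolynomial σ k) _ _ n)

/-- With `S = k[x₁,…,x_d]` acting on `M = V ⊗ₖ k[t₁,…,t_d]` via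
`x_i ↦ N_i ⊗ id + id ⊗ ∂/∂t_i` (the `N_i` pairwise commuting and locally nilpotent)
and on `k = S/(x₁,…,x_d)` via the constant coefficient, one has `Ext^i_S(k, M) = 0`
for `i ≥ 1`, and `Hom_S(k, M)` is isomorphic to the joint invariants
`{m ∈ M : x_i • m = 0 for all i}`. -/
theorem stmt5 (k : Type) [Field k] [CharZero k] (d : ℕ) (hd : 1 ≤ d)
    (V : Type) [AddCommGroup V] [Module k V]
    (N : Fin d → Module.End k V)
    (hcomm : ∀ i j : Fin d, Commute (N i) (N j))
    (hnil : ∀ (i : Fin d) (v : V), ∃ m : ℕ, (N i ^ m) v = 0)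
    (φ : MvPolynomial (Fin d) k →ₐ[k]
      Module.End k (V ⊗[k] MvPolynomial (Fin d) k))
    (hφ : ∀ i : Fin d, φ (MvPolynomial.X i) =
      LinearMap.rTensor (MvPolynomial (Fin d) k) (N i) +
        LinearMap.lTensor V (MvPolynomial.pderiv i).toLinearMap)
    [instM : Module (MvPolynomial (Fin d) k) (V ⊗[k] MvPolynomial (Fin d) k)]
    (hM : ∀ (p : MvPolynomial (Fin d) k) (m : V ⊗[k] MvPolynomial (Fin d) k),
      p • m = φ p m)
    [instk : Module (MvPolynomial (Fin d) k) k]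
    (hk : ∀ (p : MvPolynomial (Fin d) k) (a : k),
      p • a = MvPolynomial.constantCoeff p * a) :
    (∀ i : ℕ, 1 ≤ i →
      Subsingleton
        (extGroup (MvPolynomial (Fin d) k)
          (ModuleCat.of (MvPolynomial (Fin d) k) k)
          (ModuleCat.of (MvPolynomial (Fin d) k) (V ⊗[k] MvPolynomial (Fin d) k)) i)) ∧
    Nonempty ((k →ₗ[MvPolynomial (Fin d) k] (V ⊗[k] MvPolynomial (Fin d) k)) ≃+
      jointInvariants (S := MvPolynomial (Fin d) k) (M := V ⊗[k] MvPolynomial (Fin d) k)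
        (fun i : Fin d => MvPolynomial.X i)) := by
  exact stmt5_general N hcomm hnil (fun i m ↦ by rw [hM, hφ, diagonalAction]) hk
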